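/- Let d ≥ 1 and let μ, ν be Borel probability measures on ℝ^d with finite first moments. Then μ and ν are in convex order (μ ≼_c ν) if and only if C(μ,ρ) ≤ C(ν,ρ) for every Borel probability measure ρ on ℝ^d with bounded support. -/

import Mathlib

open MeasureTheory Metric RealInnerProductSpace

noncomputable section

/-- The set of couplings of two measures on `ℝ^d`. -/
def Couplings {d : ℕ} (α β : Measure (EuclideanSpace ℝ (Fin d))) :
    Set (Measure (EuclideanSpace ℝ (Fin d) × EuclideanSpace ℝ (Fin d))) :=
  {π | π.map Prod.fst = α ∧ π.map Prod.snd = β}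

/-- `C(α,β) = sup_{π ∈ Π(α,β)} ∫ ⟨x,y⟩ dπ`. -/
def OTcost {d : ℕ} (α β : Measure (EuclideanSpace ℝ (Fin d))) : ℝ :=
  sSup {r : ℝ | ∃ π ∈ Couplings α β, r = ∫ p, ⟪p.1, p.2⟫ ∂π}

/-- Convex order: `∫ f dμ ≤ ∫ f dν` for all convex `f` integrable w.r.t. both. -/
def ConvexOrder {d : ℕ} (μ ν : Measure (EuclideanSpace ℝ (Fin d))) : Prop :=
  ∀ f : EuclideanSpace ℝ (Fin d) → ℝ, ConvexOn ℝ Set.univ f →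
    Integrable f μ → Integrable f ν → ∫ x, f x ∂μ ≤ ∫ x, f x ∂ν

/-!
For a finitely supported `ρ = ∑ i, p i • δ_{a i}`, Kantorovich duality reads
`C(α, ρ) = inf_b (∫ max_i (⟪x, a i⟫ + b i) ∂α - ∑ i, p i * b i)`. The dual objective depends on `α`
only through the integral of a convex function, so it is monotone in the convex order. Weak duality
for `μ` is a pointwise inequality; for `ν` the infimum is approached by entropic regularisation: the
critical point of a smoothed dual yields a softmax plan with the right second marginal, whose loss
with respect to the maximum is at most the temperature times the number of atoms. Quantising a
boundedly supported `ρ` by finitely many points changes `C(α, ρ)` by at most `ε * ∫ ‖x‖ ∂α`.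

Conversely, let `F` be a finite maximum of affine functions and let `ρ` be the law, under `μ`, of
the slope of an active affine piece. The plan that sends `x` to its slope attains the dual bound for
`C(μ, ρ)`, so `C(μ, ρ) ≤ C(ν, ρ)` and weak duality for `ν` give `∫ F ∂μ ≤ ∫ F ∂ν`. A convex function
is the increasing limit of such maxima.
-/

section Softmax

variable {ι : Type*} [Fintype ι]

lemma abs_dotProduct_le_of_mem_stdSimplex {w : ι → ℝ} (hw : w ∈ stdSimplex ℝ ι) (v : ι → ℝ) :
    |w ⬝ᵥ v| ≤ ‖v‖ :=
  calc |w ⬝ᵥ v| ≤ ∑ i, |w i * v i| := Finset.abs_sum_le_sum_abs _ _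
    _ ≤ ∑ i, w i * ‖v‖ := by
      refine Finset.sum_le_sum fun i _ ↦ ?_
      rw [abs_mul, abs_of_nonneg (hw.1 i)]
      exact mul_le_mul_of_nonneg_left (norm_le_pi_norm v i) (hw.1 i)
    _ = ‖v‖ := by rw [← Finset.sum_mul, hw.2, one_mul]

/-- The log-sum-exp function, a smooth stand-in for the maximum of the coordinates. -/
def logSumExp (u : ι → ℝ) : ℝ :=
  Real.log (∑ i, Real.exp (u i))

/-- The softmax weights of `u`, i.e. the gradient of `logSumExp` at `u`. -/
def softmax (u : ι → ℝ) (i : ι) : ℝ :=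
  Real.exp (u i) / ∑ j, Real.exp (u j)

lemma exp_le_sum_exp (u : ι → ℝ) (i : ι) : Real.exp (u i) ≤ ∑ j, Real.exp (u j) :=
  Finset.single_le_sum (f := fun j ↦ Real.exp (u j)) (fun _ _ ↦ (Real.exp_pos _).le)
    (Finset.mem_univ i)

variable [Nonempty ι]

lemma sum_exp_pos (u : ι → ℝ) : 0 < ∑ i, Real.exp (u i) :=
  Finset.sum_pos (fun _ _ ↦ Real.exp_pos _) Finset.univ_nonempty

lemma softmax_mem_stdSimplex (u : ι → ℝ) : softmax u ∈ stdSimplex ℝ ι := by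
  refine ⟨fun i ↦ div_nonneg (Real.exp_pos _).le (sum_exp_pos u).le, ?_⟩
  simp only [softmax, ← Finset.sum_div, div_self (sum_exp_pos u).ne']

lemma continuous_softmax : Continuous (softmax : (ι → ℝ) → ι → ℝ) :=
  continuous_pi fun i ↦ Continuous.div (by fun_prop) (by fun_prop) fun u ↦ (sum_exp_pos u).ne'

lemma le_softmax_dotProduct_add {δ : ℝ} (hδ : 0 < δ) (u : ι → ℝ) (k : ι) :
    u k ≤ softmax (δ⁻¹ • u) ⬝ᵥ u + δ * Fintype.card ι := by
  set w := softmax (δ⁻¹ • u) with hw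
  obtain ⟨h_nonneg, h_sum⟩ := softmax_mem_stdSimplex (δ⁻¹ • u)
  -- `w i` is at most `exp (-t)` with `t = (u k - u i) / δ`, and `t * exp (-t) ≤ 1`.
  have h_term (i : ι) : w i * (u k - u i) ≤ δ := by
    have h_exp : (u k - u i) / δ ≤ Real.exp ((u k - u i) / δ) := by
      linarith [Real.add_one_le_exp ((u k - u i) / δ)]
    have h_weight : w i * Real.exp ((u k - u i) / δ) ≤ 1 := by
      rw [hw, softmax, div_mul_eq_mul_div, div_le_one (sum_exp_pos _), ← Real.exp_add]
      refine le_trans (le_of_eq ?_) (exp_le_sum_exp _ k)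
      congr 1
      simp only [Pi.smul_apply, smul_eq_mul]
      ring
    calc w i * (u k - u i) = δ * (w i * ((u k - u i) / δ)) := by field_simp
      _ ≤ δ * 1 := by
        gcongr
        exact (mul_le_mul_of_nonneg_left h_exp (h_nonneg i)).trans h_weight
      _ = δ := mul_one δ
  have h_total : ∑ i, w i * (u k - u i) = u k - w ⬝ᵥ u := by
    simp only [mul_sub, Finset.sum_sub_distrib, ← Finset.sum_mul, dotProduct]
    rw [hw, h_sum, one_mul]
  have h_bound : ∑ i, w i * (u k - u i) ≤ Fintype.card ι * δ := by
    simpa using Finset.sum_le_sum fun i (_ : i ∈ Finset.univ) ↦ h_term i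
  linarith

lemma le_logSumExp (u : ι → ℝ) (i : ι) : u i ≤ logSumExp u :=
  (Real.le_log_iff_exp_le (sum_exp_pos u)).2 (exp_le_sum_exp u i)

lemma logSumExp_mono : Monotone (logSumExp : (ι → ℝ) → ℝ) := fun u _ huv ↦
  Real.log_le_log (sum_exp_pos u) (Finset.sum_le_sum fun i _ ↦ Real.exp_le_exp.2 (huv i))

lemma logSumExp_add_const (u : ι → ℝ) (t : ℝ) :
    logSumExp (u + Function.const ι t) = logSumExp u + t := by
  simp only [logSumExp, Pi.add_apply, Function.const_apply, Real.exp_add, ← Finset.sum_mul]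
  rw [Real.log_mul (sum_exp_pos u).ne' (Real.exp_pos t).ne', Real.log_exp]

lemma lipschitzWith_logSumExp : LipschitzWith 1 (logSumExp : (ι → ℝ) → ℝ) := by
  refine LipschitzWith.of_le_add fun u v ↦ ?_
  rw [← logSumExp_add_const]
  refine logSumExp_mono fun i ↦ ?_
  have h_coord := (le_abs_self _).trans (dist_le_pi_dist u v i)
  exact sub_le_iff_le_add'.1 h_coord

lemma hasDerivAt_logSumExp_add_smul (u v : ι → ℝ) (t : ℝ) :
    HasDerivAt (fun t : ℝ ↦ logSumExp (u + t • v)) (softmax (u + t • v) ⬝ᵥ v) t := by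
  have h_coord (i : ι) : HasDerivAt (fun t : ℝ ↦ (u + t • v) i) (v i) t := by
    simpa using ((hasDerivAt_id t).mul_const (v i)).const_add (u i)
  have h_sum := HasDerivAt.fun_sum fun i (_ : i ∈ Finset.univ) ↦ (h_coord i).exp
  refine (h_sum.log (sum_exp_pos (u + t • v)).ne').congr_deriv ?_
  simp only [dotProduct, softmax, Finset.sum_div, div_mul_eq_mul_div]

end Softmax

section EntropicDual

variable {ι Ω : Type*} [Fintype ι] [MeasurableSpace Ω] {ν : Measure Ω} {c : Ω → ι → ℝ}
  {p : ι → ℝ}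

/-- The dual objective of entropic semi-discrete optimal transport from `ν` to the weights `p`, for
the reward `c x i` of sending `x` to the `i`-th atom. Its critical points are the potentials `b`
whose softmax plan `x ↦ softmax (c x + b)` has second marginal `p`. -/
def entropicDual (ν : Measure Ω) (c : Ω → ι → ℝ) (p b : ι → ℝ) : ℝ :=
  ∫ x, logSumExp (c x + b) ∂ν - p ⬝ᵥ b

variable [Nonempty ι]

lemma integrable_logSumExp_add [IsFiniteMeasure ν] (hc : Integrable c ν) (b : ι → ℝ) :
    Integrable (fun x ↦ logSumExp (c x + b)) ν := by
  refine Integrable.mono' (g := fun x ↦ ‖c x‖ + |logSumExp b|)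
    (hc.norm.add (integrable_const _))
    (lipschitzWith_logSumExp.continuous.comp_aestronglyMeasurable
      (hc.aestronglyMeasurable.add_const b))
    (.of_forall fun x ↦ ?_)
  have h_lip : dist (logSumExp (c x + b)) (logSumExp b) ≤ ‖c x‖ := by
    simpa [dist_eq_norm] using lipschitzWith_logSumExp.dist_le_mul (c x + b) b
  have h_norm := norm_le_norm_add_norm_sub' (logSumExp (c x + b)) (logSumExp b)
  simp only [dist_eq_norm, Real.norm_eq_abs] at h_lip h_norm ⊢
  linarith

lemma hasDerivAt_entropicDual [IsFiniteMeasure ν] (hc : Integrable c ν) (b v : ι → ℝ) :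
    HasDerivAt (fun t : ℝ ↦ entropicDual ν c p (b + t • v))
      (∫ x, softmax (c x + b) ⬝ᵥ v ∂ν - p ⬝ᵥ v) 0 := by
  have h_integral : HasDerivAt (fun t : ℝ ↦ ∫ x, logSumExp (c x + b + t • v) ∂ν)
      (∫ x, softmax (c x + b + (0 : ℝ) • v) ⬝ᵥ v ∂ν) 0 := by
    refine (hasDerivAt_integral_of_dominated_loc_of_deriv_le
      (F := fun t x ↦ logSumExp (c x + b + t • v))
      (F' := fun t x ↦ softmax (c x + b + t • v) ⬝ᵥ v) (bound := fun _ ↦ ‖v‖)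
      Filter.univ_mem (.of_forall fun t ↦ ?_) ?_ ?_ ?_ (integrable_const _) ?_).2
    · simpa only [add_assoc] using
        (integrable_logSumExp_add hc (b + t • v)).aestronglyMeasurable
    · simpa only [add_assoc] using integrable_logSumExp_add hc (b + (0 : ℝ) • v)
    · exact (continuous_softmax.dotProduct continuous_const).comp_aestronglyMeasurable
        ((hc.aestronglyMeasurable.add_const b).add_const _)
    · exact .of_forall fun x t _ ↦ abs_dotProduct_le_of_mem_stdSimplex (softmax_mem_stdSimplex _) _
    · exact .of_forall fun x t _ ↦ hasDerivAt_logSumExp_add_smul _ _ _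
  have h_linear : HasDerivAt (fun t : ℝ ↦ p ⬝ᵥ (b + t • v)) (p ⬝ᵥ v) 0 := by
    simpa using ((hasDerivAt_id (0 : ℝ)).mul_const (p ⬝ᵥ v)).const_add (p ⬝ᵥ b)
  simpa only [entropicDual, zero_smul, add_zero, add_assoc] using h_integral.fun_sub h_linear

variable [IsProbabilityMeasure ν]

lemma continuous_entropicDual (hc : Integrable c ν) : Continuous (entropicDual ν c p) := by
  refine Continuous.sub (LipschitzWith.of_le_add fun b b' ↦ ?_).continuous
    (continuous_const.dotProduct continuous_id)
  calc ∫ x, logSumExp (c x + b) ∂ν ≤ ∫ x, (logSumExp (c x + b') + dist b b') ∂ν := by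
        refine integral_mono (integrable_logSumExp_add hc b)
          ((integrable_logSumExp_add hc b').add (integrable_const _)) fun x ↦ ?_
        simpa using sub_le_iff_le_add'.1 ((le_abs_self _).trans
          (lipschitzWith_logSumExp.dist_le_mul (c x + b) (c x + b')))
    _ = ∫ x, logSumExp (c x + b') ∂ν + dist b b' := by
        rw [integral_add (integrable_logSumExp_add hc b') (integrable_const _)]
        simp

lemma entropicDual_add_const (hc : Integrable c ν) (hp : ∑ i, p i = 1) (b : ι → ℝ) (t : ℝ) :
    entropicDual ν c p (b + Function.const ι t) = entropicDual ν c p b := by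
  have h_dot : p ⬝ᵥ Function.const ι t = t := by
    simp [dotProduct, ← Finset.sum_mul, hp]
  simp only [entropicDual, ← add_assoc, logSumExp_add_const, dotProduct_add, h_dot]
  rw [integral_add (integrable_logSumExp_add hc b) (integrable_const t)]
  simp

lemma mul_sub_sub_le_entropicDual (hc : Integrable c ν) (hp : p ∈ stdSimplex ℝ ι) {b : ι → ℝ}
    {m : ι} (hm : ∀ i, b i ≤ b m) (k : ι) :
    p k * (b m - b k) - ∫ x, ‖c x‖ ∂ν ≤ entropicDual ν c p b := by
  have h_int : b m - ∫ x, ‖c x‖ ∂ν ≤ ∫ x, logSumExp (c x + b) ∂ν := by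
    calc b m - ∫ x, ‖c x‖ ∂ν = ∫ x, (b m - ‖c x‖) ∂ν := by
          rw [integral_sub (integrable_const _) hc.norm]
          simp
      _ ≤ ∫ x, logSumExp (c x + b) ∂ν := by
          refine integral_mono ((integrable_const _).sub hc.norm)
            (integrable_logSumExp_add hc b) fun x ↦ ?_
          have h_coord := (abs_le.1 (norm_le_pi_norm (c x) m)).1
          have h_lse := le_logSumExp (c x + b) m
          simp only [Pi.add_apply] at h_lse ⊢
          linarith
  have h_dot : p k * (b m - b k) ≤ b m - p ⬝ᵥ b := by
    calc p k * (b m - b k) ≤ ∑ i, p i * (b m - b i) :=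
          Finset.single_le_sum (f := fun i ↦ p i * (b m - b i))
            (fun i _ ↦ mul_nonneg (hp.1 i) (sub_nonneg.2 (hm i))) (Finset.mem_univ k)
      _ = b m - p ⬝ᵥ b := by
          simp only [mul_sub, Finset.sum_sub_distrib, ← Finset.sum_mul, hp.2, one_mul, dotProduct]
  rw [entropicDual]
  linarith

lemma exists_forall_entropicDual_le (hc : Integrable c ν) (hp_pos : ∀ i, 0 < p i)
    (hp : ∑ i, p i = 1) : ∃ b, ∀ b', entropicDual ν c p b ≤ entropicDual ν c p b' := by
  set Φ := entropicDual ν c p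
  obtain ⟨k₀, hk₀⟩ := Finite.exists_max fun k ↦ (Φ 0 + ∫ x, ‖c x‖ ∂ν) / p k
  set R := max 0 ((Φ 0 + ∫ x, ‖c x‖ ∂ν) / p k₀)
  have h_zero_mem : (0 : ι → ℝ) ∈ Set.Icc (Function.const ι (-R)) 0 :=
    ⟨fun i ↦ neg_nonpos.2 (le_max_left _ _), le_rfl⟩
  have h_cont : Continuous Φ := continuous_entropicDual hc
  obtain ⟨b, -, hb⟩ := isCompact_Icc.exists_isMinOn ⟨0, h_zero_mem⟩ h_cont.continuousOn
  refine ⟨b, fun v ↦ ?_⟩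
  -- Constants do not change `Φ`, so one may assume that the largest coordinate is `0`.
  obtain ⟨m, hm⟩ := Finite.exists_max v
  set e := v + Function.const ι (-v m)
  have h_shift : Φ e = Φ v := entropicDual_add_const hc hp v (-v m)
  rw [← h_shift]
  have he_m : e m = 0 := by simp [e]
  have he_le (i : ι) : e i ≤ 0 := by simpa [e] using hm i
  by_cases he : ∀ i, -R ≤ e i
  · exact hb ⟨he, he_le⟩
  · push Not at he
    obtain ⟨k, hk⟩ := he
    have h_coercive : p k * (e m - e k) - ∫ x, ‖c x‖ ∂ν ≤ Φ e :=
      mul_sub_sub_le_entropicDual hc ⟨fun i ↦ (hp_pos i).le, hp⟩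
        (fun i ↦ (he_le i).trans_eq he_m.symm) k
    have h_radius : Φ 0 + ∫ x, ‖c x‖ ∂ν ≤ p k * R := by
      rw [← div_le_iff₀' (hp_pos k)]
      exact (hk₀ k).trans (le_max_right _ _)
    have h_far : p k * R ≤ p k * (e m - e k) :=
      mul_le_mul_of_nonneg_left (by linarith) (hp_pos k).le
    have h_zero : Φ b ≤ Φ 0 := hb h_zero_mem
    linarith

lemma exists_integral_softmax_eq (hc : Integrable c ν) (hp_pos : ∀ i, 0 < p i)
    (hp : ∑ i, p i = 1) : ∃ b : ι → ℝ, ∀ i, ∫ x, softmax (c x + b) i ∂ν = p i := by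
  classical
  obtain ⟨b, hb⟩ := exists_forall_entropicDual_le hc hp_pos hp
  refine ⟨b, fun i ↦ ?_⟩
  have h_min : IsLocalMin (fun t : ℝ ↦ entropicDual ν c p (b + t • Pi.single i 1)) 0 :=
    .of_forall fun t ↦ by simpa using hb _
  have h_crit := h_min.hasDerivAt_eq_zero (hasDerivAt_entropicDual hc b (Pi.single i 1))
  simpa only [dotProduct_single_one, sub_eq_zero] using h_crit

end EntropicDual

section Fenchel

variable {E : Type*} [NormedAddCommGroup E] [InnerProductSpace ℝ E]

/-- The Fenchel conjugate of `f`. As a real supremum, it takes the junk value `0` at the slopes `y`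
for which `x ↦ ⟪x, y⟫ - f x` is unbounded above. -/
def fenchelConjugate (f : E → ℝ) (y : E) : ℝ :=
  ⨆ x, (⟪x, y⟫ - f x)

lemma inner_le_add_fenchelConjugate {f : E → ℝ} {y : E}
    (hy : BddAbove (Set.range fun x ↦ ⟪x, y⟫ - f x)) (x : E) :
    ⟪x, y⟫ ≤ f x + fenchelConjugate f y :=
  sub_le_iff_le_add'.1 (le_ciSup hy x)

variable {ι : Type*}

/-- The pointwise maximum of the affine functions with slopes `a i` and intercepts `b i`. -/
def maxAffine (a : ι → E) (b : ι → ℝ) (x : E) : ℝ :=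
  ⨆ i, (⟪x, a i⟫ + b i)

lemma measurable_maxAffine [MeasurableSpace E] [OpensMeasurableSpace E] [Countable ι]
    (a : ι → E) (b : ι → ℝ) : Measurable (maxAffine a b) :=
  Measurable.iSup fun i ↦ (by fun_prop : Continuous fun x ↦ ⟪x, a i⟫ + b i).measurable

variable [Finite ι]

lemma le_maxAffine (a : ι → E) (b : ι → ℝ) (x : E) (i : ι) : ⟪x, a i⟫ + b i ≤ maxAffine a b x :=
  le_ciSup (f := fun i ↦ ⟪x, a i⟫ + b i) (Set.finite_range _).bddAbove i

lemma inner_sub_maxAffine_le (a : ι → E) (b : ι → ℝ) (x : E) (i : ι) :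
    ⟪x, a i⟫ - maxAffine a b x ≤ -b i := by
  linarith [le_maxAffine a b x i]

lemma fenchelConjugate_maxAffine_le (a : ι → E) (b : ι → ℝ) (i : ι) :
    fenchelConjugate (maxAffine a b) (a i) ≤ -b i :=
  ciSup_le fun x ↦ inner_sub_maxAffine_le a b x i

lemma bddAbove_inner_sub_maxAffine (a : ι → E) (b : ι → ℝ) (i : ι) :
    BddAbove (Set.range fun x ↦ ⟪x, a i⟫ - maxAffine a b x) :=
  ⟨-b i, Set.forall_mem_range.2 fun x ↦ inner_sub_maxAffine_le a b x i⟩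

variable [Nonempty ι]

lemma convexOn_maxAffine (a : ι → E) (b : ι → ℝ) : ConvexOn ℝ Set.univ (maxAffine a b) := by
  refine ⟨convex_univ, fun x _ y _ s t hs ht hst ↦ ciSup_le fun i ↦ ?_⟩
  calc ⟪s • x + t • y, a i⟫ + b i = s * (⟪x, a i⟫ + b i) + t * (⟪y, a i⟫ + b i) := by
        rw [inner_add_left, real_inner_smul_left, real_inner_smul_left]
        linear_combination (-b i) * hst
    _ ≤ s • maxAffine a b x + t • maxAffine a b y :=
        add_le_add (mul_le_mul_of_nonneg_left (le_maxAffine a b x i) hs)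
          (mul_le_mul_of_nonneg_left (le_maxAffine a b y i) ht)

lemma exists_tendsto_maxAffine [CompleteSpace E] [SecondCountableTopology E] {f : E → ℝ}
    (hf : ConvexOn ℝ Set.univ f) (hf_lsc : LowerSemicontinuous f) :
    ∃ (a : ℕ → E) (b : ℕ → ℝ),
      (∀ x, Monotone fun n ↦ maxAffine (fun i : Fin (n + 1) ↦ a i) (fun i ↦ b i) x) ∧
      ∀ x, Filter.Tendsto (fun n ↦ maxAffine (fun i : Fin (n + 1) ↦ a i) (fun i ↦ b i) x)
        Filter.atTop (nhds (f x)) := by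
  obtain ⟨l, b, h_minorant, h_sup⟩ := hf.real_univ_sSup_of_nat_affine_eq hf_lsc
  set a : ℕ → E := fun n ↦ (InnerProductSpace.toDual ℝ E).symm (l n)
  have h_inner (x : E) (n : ℕ) : ⟪x, a n⟫ = l n x := by
    rw [real_inner_comm]
    exact InnerProductSpace.toDual_symm_apply
  have h_le (x : E) (n k : ℕ) (hk : k ≤ n) :
      ⟪x, a k⟫ + b k ≤ maxAffine (fun i : Fin (n + 1) ↦ a i) (fun i ↦ b i) x :=
    le_maxAffine (fun i : Fin (n + 1) ↦ a i) (fun i ↦ b i) x ⟨k, Nat.lt_succ_of_le hk⟩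
  have h_mono (x : E) :
      Monotone fun n ↦ maxAffine (fun i : Fin (n + 1) ↦ a i) (fun i ↦ b i) x := fun m n hmn ↦
    ciSup_le fun i ↦ h_le x n i ((Nat.le_of_lt_succ i.2).trans hmn)
  refine ⟨a, b, h_mono, fun x ↦ tendsto_atTop_isLUB (h_mono x) ⟨?_, fun r hr ↦ ?_⟩⟩
  · rintro _ ⟨n, rfl⟩
    exact ciSup_le fun i ↦ by simpa [h_inner] using h_minorant i x
  · rw [← h_sup, iSup_apply]
    refine ciSup_le fun n ↦ ?_
    have h_bound := (h_le x n n le_rfl).trans (hr ⟨n, rfl⟩)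
    simpa [h_inner] using h_bound

variable [MeasurableSpace E] [OpensMeasurableSpace E] {α : Measure E} [IsFiniteMeasure α]

lemma integrable_maxAffine (hα : Integrable (fun x ↦ ‖x‖) α) (a : ι → E) (b : ι → ℝ) :
    Integrable (maxAffine a b) α := by
  have := Fintype.ofFinite ι
  refine Integrable.mono' (g := fun x ↦ ∑ i, (‖x‖ * ‖a i‖ + |b i|))
    (integrable_finsetSum _ fun i _ ↦ (hα.mul_const _).add (integrable_const _))
    (measurable_maxAffine a b).aestronglyMeasurable (.of_forall fun x ↦ ?_)
  obtain ⟨i, hi⟩ := exists_eq_ciSup_of_finite (f := fun i ↦ ⟪x, a i⟫ + b i)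
  calc ‖maxAffine a b x‖ = |⟪x, a i⟫ + b i| := by rw [maxAffine, ← hi, Real.norm_eq_abs]
    _ ≤ ‖x‖ * ‖a i‖ + |b i| :=
        (abs_add_le _ _).trans (add_le_add_left (abs_real_inner_le_norm x (a i)) _)
    _ ≤ ∑ i, (‖x‖ * ‖a i‖ + |b i|) :=
        Finset.single_le_sum (f := fun i ↦ ‖x‖ * ‖a i‖ + |b i|) (fun _ _ ↦ by positivity)
          (Finset.mem_univ i)

end Fenchel

section MeasureTools

variable {X Y Z ι : Type*} [MeasurableSpace X] [MeasurableSpace Y] [MeasurableSpace Z]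

lemma exists_measurable_argmax [MeasurableSpace ι] [Finite ι] [Nonempty ι] {u : ι → X → ℝ}
    (hu : ∀ i, Measurable (u i)) : ∃ T : X → ι, Measurable T ∧ ∀ x i, u i x ≤ u (T x) x := by
  classical
  obtain ⟨e, he⟩ := exists_surjective_nat ι
  have h_exists (x : X) : ∃ k, ∀ i, u i x ≤ u (e k) x := by
    obtain ⟨m, hm⟩ := Finite.exists_max fun i ↦ u i x
    obtain ⟨k, rfl⟩ := he m
    exact ⟨k, hm⟩
  have h_meas (k : ℕ) : MeasurableSet {x | ∀ i, u i x ≤ u (e k) x} := by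
    rw [Set.ofPred_forall]
    exact MeasurableSet.iInter fun i ↦ measurableSet_le (hu i) (hu (e k))
  exact ⟨fun x ↦ e (Nat.find (h_exists x)),
    measurable_from_nat.comp (measurable_find h_exists h_meas),
    fun x ↦ Nat.find_spec (h_exists x)⟩

lemma exists_measurable_mem_finset_dist_le {M : Type*} [PseudoMetricSpace M] [Nonempty M]
    [MeasurableSpace M] [OpensMeasurableSpace M] {s : Set M} (hs : TotallyBounded s) {ε : ℝ}
    (hε : 0 < ε) :
    ∃ (S : Finset M) (g : M → M), Measurable g ∧ (∀ y, g y ∈ S) ∧ ∀ y ∈ s, dist y (g y) ≤ ε := by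
  classical
  obtain ⟨t, ht_fin, hst⟩ := Metric.totallyBounded_iff.1 hs ε hε
  lift t to Finset M using ht_fin
  set S := insert (Classical.arbitrary M) t
  have : Nonempty S := ⟨⟨_, Finset.mem_insert_self _ _⟩⟩
  obtain ⟨T, hT_meas, hT⟩ := exists_measurable_argmax (u := fun (i : S) (y : M) ↦ -dist y i)
    fun i ↦ (continuous_id.dist continuous_const).neg.measurable
  refine ⟨S, fun y ↦ T y, measurable_subtype_coe.comp hT_meas, fun y ↦ (T y).2, fun y hy ↦ ?_⟩
  obtain ⟨z, hz, hyz⟩ := Set.mem_iUnion₂.1 (hst hy)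
  exact (neg_le_neg_iff.1 (hT y ⟨z, Finset.mem_insert_of_mem hz⟩)).trans (mem_ball.1 hyz).le

open ProbabilityTheory in
lemma exists_gluing [StandardBorelSpace Z] [Nonempty Z] {π : Measure (X × Y)} {σ : Measure (Y × Z)}
    [IsFiniteMeasure π] [IsFiniteMeasure σ] (h : π.snd = σ.fst) :
    ∃ τ : Measure ((X × Y) × Z), τ.fst = π ∧ τ.map (Prod.map Prod.snd id) = σ := by
  refine ⟨π ⊗ₘ σ.condKernel.prodMkLeft X, Measure.fst_compProd _ _, ?_⟩
  ext A hA
  rw [Measure.map_apply (by fun_prop) hA, Measure.compProd_apply (hA.preimage (by fun_prop))]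
  conv_rhs => rw [← σ.disintegrate σ.condKernel, Measure.compProd_apply hA, ← h, Measure.snd,
    lintegral_map (Kernel.measurable_kernel_prodMk_left hA) measurable_snd]
  rfl

/-- The finitely supported measure with mass `p i` at `a i`; negative weights count as `0`. -/
def discreteMeasure [Fintype ι] (a : ι → Y) (p : ι → ℝ) : Measure Y :=
  ∑ i, ENNReal.ofReal (p i) • Measure.dirac (a i)

/-- The transport plan that splits the mass of `ν` at `x` among the points `a i` with the weights
`h x i`. -/
def semidiscretePlan [Fintype ι] (ν : Measure X) (h : X → ι → ℝ) (a : ι → Y) : Measure (X × Y) :=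
  ∑ i, (ν.withDensity fun x ↦ ENNReal.ofReal (h x i)).map fun x ↦ (x, a i)

variable [Fintype ι] {ν : Measure X} {h : X → ι → ℝ}

lemma map_fst_semidiscretePlan (hh : Measurable h) (h_simplex : ∀ x, h x ∈ stdSimplex ℝ ι)
    (a : ι → Y) : (semidiscretePlan ν h a).map Prod.fst = ν := by
  have h_weights (x : X) : ∑ i, ENNReal.ofReal (h x i) = 1 := by
    rw [← ENNReal.ofReal_sum_of_nonneg fun i _ ↦ (h_simplex x).1 i, (h_simplex x).2,
      ENNReal.ofReal_one]
  have h_map (i : ι) : ((ν.withDensity fun x ↦ ENNReal.ofReal (h x i)).map fun x ↦ (x, a i)).map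
      Prod.fst = ν.withDensity fun x ↦ ENNReal.ofReal (h x i) := by
    rw [Measure.map_map measurable_fst (by fun_prop)]
    exact Measure.map_id
  rw [semidiscretePlan, Measure.map_finset_sum' measurable_fst.aemeasurable]
  simp only [h_map]
  ext A hA
  simp only [Measure.finsetSum_apply, withDensity_apply _ hA]
  rw [← lintegral_finsetSum _ fun i _ ↦ by fun_prop]
  simp [h_weights]

lemma integrable_of_mem_stdSimplex [IsFiniteMeasure ν] (hh : Measurable h)
    (h_simplex : ∀ x, h x ∈ stdSimplex ℝ ι) (i : ι) : Integrable (fun x ↦ h x i) ν := by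
  refine Integrable.of_bound (by fun_prop) 1 (.of_forall fun x ↦ ?_)
  rw [Real.norm_of_nonneg ((h_simplex x).1 i)]
  exact (mem_Icc_of_mem_stdSimplex (h_simplex x) i).2

lemma integral_mem_stdSimplex [IsProbabilityMeasure ν] (hh : Measurable h)
    (h_simplex : ∀ x, h x ∈ stdSimplex ℝ ι) : (fun i ↦ ∫ x, h x i ∂ν) ∈ stdSimplex ℝ ι := by
  refine ⟨fun i ↦ integral_nonneg fun x ↦ (h_simplex x).1 i, ?_⟩
  rw [← integral_finsetSum _ fun i _ ↦ integrable_of_mem_stdSimplex hh h_simplex i]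
  simp [(h_simplex _).2]

lemma map_snd_semidiscretePlan [IsFiniteMeasure ν] (hh : Measurable h)
    (h_simplex : ∀ x, h x ∈ stdSimplex ℝ ι) (a : ι → Y) :
    (semidiscretePlan ν h a).map Prod.snd =
      discreteMeasure a (fun i ↦ ∫ x, h x i ∂ν) := by
  rw [semidiscretePlan, discreteMeasure, Measure.map_finset_sum' measurable_snd.aemeasurable]
  refine Finset.sum_congr rfl fun i _ ↦ ?_
  rw [Measure.map_map measurable_snd (by fun_prop),
    ofReal_integral_eq_lintegral_ofReal (integrable_of_mem_stdSimplex hh h_simplex i)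
      (.of_forall fun x ↦ (h_simplex x).1 i)]
  simp [Function.comp_def, Measure.map_const]

lemma integral_semidiscretePlan (hh : Measurable h) (h_simplex : ∀ x, h x ∈ stdSimplex ℝ ι)
    {a : ι → Y} {G : X × Y → ℝ} (hG_meas : Measurable G)
    (hG : Integrable G (semidiscretePlan ν h a)) :
    ∫ q, G q ∂semidiscretePlan ν h a = ∫ x, h x ⬝ᵥ (fun i ↦ G (x, a i)) ∂ν := by
  have h_density (i : ι) : Measurable fun x ↦ ENNReal.ofReal (h x i) := by fun_prop
  have h_finite (i : ι) : ∀ᵐ x ∂ν, ENNReal.ofReal (h x i) < ⊤ := .of_forall fun _ ↦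
    ENNReal.ofReal_lt_top
  have h_slice (i : ι) : Integrable (fun x ↦ h x i * G (x, a i)) ν := by
    have := (integrable_finsetSum_measure.1 hG i (Finset.mem_univ i)).comp_measurable
      (measurable_id.prodMk measurable_const)
    simpa [integrable_withDensity_iff_integrable_smul' (h_density i) (h_finite i),
      ENNReal.toReal_ofReal ((h_simplex _).1 i)] using this
  rw [semidiscretePlan, integral_finsetSum_measure (integrable_finsetSum_measure.1 hG)]
  simp only [dotProduct]
  rw [integral_finsetSum _ fun i _ ↦ h_slice i]
  refine Finset.sum_congr rfl fun i _ ↦ ?_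
  rw [integral_map (by fun_prop) hG_meas.aestronglyMeasurable,
    integral_withDensity_eq_integral_toReal_smul (h_density i) (h_finite i)]
  simp only [ENNReal.toReal_ofReal ((h_simplex _).1 i), smul_eq_mul]

lemma integrable_dotProduct_of_mem_stdSimplex (hh : Measurable h)
    (h_simplex : ∀ x, h x ∈ stdSimplex ℝ ι) {w : X → ι → ℝ} (hw : Integrable w ν) :
    Integrable (fun x ↦ h x ⬝ᵥ w x) ν :=
  hw.norm.mono' (continuous_fst.dotProduct continuous_snd |>.comp_aestronglyMeasurable
    (hh.aestronglyMeasurable.prodMk hw.aestronglyMeasurable))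
    (.of_forall fun x ↦ abs_dotProduct_le_of_mem_stdSimplex (h_simplex x) (w x))

lemma integral_dotProduct_const (hh : ∀ i, Integrable (fun x ↦ h x i) ν) (b : ι → ℝ) :
    ∫ x, h x ⬝ᵥ b ∂ν = (fun i ↦ ∫ x, h x i ∂ν) ⬝ᵥ b := by
  simp only [dotProduct]
  rw [integral_finsetSum _ fun i _ ↦ (hh i).mul_const (b i)]
  simp only [integral_mul_const]

end MeasureTools

section DiscreteMeasure

variable {ι Y : Type*} [Fintype ι] [MeasurableSpace Y] {a : ι → Y} {p : ι → ℝ}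

lemma isProbabilityMeasure_discreteMeasure (hp : p ∈ stdSimplex ℝ ι) :
    IsProbabilityMeasure (discreteMeasure a p) := by
  refine ⟨?_⟩
  simp [discreteMeasure, ← ENNReal.ofReal_sum_of_nonneg fun i _ ↦ hp.1 i, hp.2]

variable [MeasurableSingletonClass Y]

lemma ae_discreteMeasure {P : Y → Prop} (h : ∀ i, P (a i)) : ∀ᵐ y ∂discreteMeasure a p, P y := by
  rw [discreteMeasure, ae_finsetSum_measure_iff]
  exact fun i _ ↦ Measure.ae_smul_measure (by simpa using h i) _

lemma integrable_discreteMeasure (f : Y → ℝ) : Integrable f (discreteMeasure a p) := by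
  refine integrable_finsetSum_measure.2 fun i _ ↦ ?_
  exact (integrable_dirac enorm_lt_top).smul_measure ENNReal.ofReal_ne_top

lemma integral_discreteMeasure (hp : 0 ≤ p) (f : Y → ℝ) :
    ∫ y, f y ∂discreteMeasure a p = p ⬝ᵥ f ∘ a := by
  rw [discreteMeasure, integral_finsetSum_measure
    (integrable_finsetSum_measure.1 (integrable_discreteMeasure f))]
  simp [dotProduct, ENNReal.toReal_ofReal (hp _)]

lemma exists_eq_discreteMeasure {ρ : Measure Y} [IsProbabilityMeasure ρ] {S : Finset Y}
    (hS : ∀ᵐ y ∂ρ, y ∈ S) :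
    ∃ (T : Finset Y) (p : T → ℝ), (∀ i, 0 < p i) ∧ ∑ i, p i = 1 ∧
      ρ = discreteMeasure Subtype.val p := by
  classical
  set T := S.filter fun y ↦ ρ {y} ≠ 0
  have h_sum : ρ = ∑ y ∈ T, ρ {y} • Measure.dirac y := by
    rw [Finset.sum_filter_of_ne fun y _ ↦ left_ne_zero_of_smul]
    exact Measure.ae_mem_finset_iff.1 hS
  refine ⟨T, fun i ↦ ρ.real {i.1}, fun i ↦ ?_, ?_, ?_⟩
  · exact ENNReal.toReal_pos (Finset.mem_filter.1 i.2).2 (measure_ne_top _ _)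
  · rw [Finset.sum_coe_sort T fun y ↦ ρ.real {y}, sum_measureReal_singleton]
    have h_mem : ∀ᵐ y ∂ρ, y ∈ T := Measure.ae_mem_finset_iff.2 h_sum
    rw [measureReal_def, (mem_ae_iff_prob_eq_one T.measurableSet).1 h_mem, ENNReal.toReal_one]
  · simpa only [discreteMeasure, ofReal_measureReal (measure_ne_top ρ _),
      Finset.sum_coe_sort T fun y ↦ ρ {y} • Measure.dirac y] using h_sum

lemma exists_map_eq_discreteMeasure {M : Type*} [PseudoMetricSpace M] [MeasurableSpace M]
    [OpensMeasurableSpace M] [MeasurableSingletonClass M] {ρ : Measure M} [IsProbabilityMeasure ρ]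
    {s : Set M} (hs : TotallyBounded s) (hρ : ∀ᵐ y ∂ρ, y ∈ s) {ε : ℝ} (hε : 0 < ε) :
    ∃ (g : M → M) (T : Finset M) (p : T → ℝ), Measurable g ∧ (∀ᵐ y ∂ρ, dist y (g y) ≤ ε) ∧
      (∀ i, 0 < p i) ∧ ∑ i, p i = 1 ∧ ρ.map g = discreteMeasure Subtype.val p := by
  have : Nonempty M := nonempty_of_isProbabilityMeasure ρ
  obtain ⟨S, g, hg_meas, hgS, hg⟩ := exists_measurable_mem_finset_dist_le hs hε
  have := Measure.isProbabilityMeasure_map (μ := ρ) hg_meas.aemeasurable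
  have hS : ∀ᵐ y ∂ρ.map g, y ∈ S :=
    (ae_map_iff hg_meas.aemeasurable S.measurableSet).2 (.of_forall hgS)
  obtain ⟨T, p, hp_pos, hp, hρ'⟩ := exists_eq_discreteMeasure hS
  exact ⟨g, T, p, hg_meas, hρ.mono hg, hp_pos, hp, hρ'⟩

end DiscreteMeasure

section OptimalTransport

variable {d : ℕ} {α ρ ρ' ν : Measure (EuclideanSpace ℝ (Fin d))} {R : ℝ}
  {π σ : Measure (EuclideanSpace ℝ (Fin d) × EuclideanSpace ℝ (Fin d))}

lemma integrable_inner_of_mem_couplings (hα : Integrable (fun x ↦ ‖x‖) α)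
    (hρ : ∀ᵐ y ∂ρ, ‖y‖ ≤ R) (hπ : π ∈ Couplings α ρ) :
    Integrable (fun q ↦ ⟪q.1, q.2⟫) π := by
  obtain ⟨rfl, rfl⟩ := hπ
  refine ((hα.comp_measurable measurable_fst).mul_const R).mono'
    (by fun_prop : Continuous _).aestronglyMeasurable ?_
  filter_upwards [ae_of_ae_map measurable_snd.aemeasurable hρ] with q hq
  exact (norm_inner_le_norm q.1 q.2).trans (mul_le_mul_of_nonneg_left hq (norm_nonneg _))

lemma le_OTcost (hα : Integrable (fun x ↦ ‖x‖) α) (hρ : ∀ᵐ y ∂ρ, ‖y‖ ≤ R)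
    (hπ : π ∈ Couplings α ρ) : ∫ q, ⟪q.1, q.2⟫ ∂π ≤ OTcost α ρ := by
  refine le_csSup ⟨∫ x, ‖x‖ * R ∂α, ?_⟩ ⟨π, hπ, rfl⟩
  rintro _ ⟨π', hπ', rfl⟩
  have h_integrable := integrable_inner_of_mem_couplings hα hρ hπ'
  obtain ⟨rfl, rfl⟩ := hπ'
  rw [integral_map measurable_fst.aemeasurable (by fun_prop)]
  refine integral_mono_ae h_integrable ((hα.comp_measurable measurable_fst).mul_const R) ?_
  filter_upwards [ae_of_ae_map measurable_snd.aemeasurable hρ] with q hq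
  exact (real_inner_le_norm q.1 q.2).trans (mul_le_mul_of_nonneg_left hq (norm_nonneg _))

lemma OTcost_le [IsProbabilityMeasure α] [IsProbabilityMeasure ρ] {r : ℝ}
    (h : ∀ π ∈ Couplings α ρ, ∫ q, ⟪q.1, q.2⟫ ∂π ≤ r) : OTcost α ρ ≤ r := by
  refine csSup_le ⟨_, α.prod ρ, ⟨by simp, by simp⟩, rfl⟩ ?_
  rintro _ ⟨π, hπ, rfl⟩
  exact h π hπ

lemma OTcost_le_integral_add_integral_fenchelConjugate [IsProbabilityMeasure α]
    [IsProbabilityMeasure ρ] {f : EuclideanSpace ℝ (Fin d) → ℝ}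
    (hα : Integrable (fun x ↦ ‖x‖) α) (hρ : ∀ᵐ y ∂ρ, ‖y‖ ≤ R) (hf : Integrable f α)
    (hf' : Integrable (fenchelConjugate f) ρ)
    (h_bdd : ∀ᵐ y ∂ρ, BddAbove (Set.range fun x ↦ ⟪x, y⟫ - f x)) :
    OTcost α ρ ≤ ∫ x, f x ∂α + ∫ y, fenchelConjugate f y ∂ρ := by
  refine OTcost_le fun π hπ ↦ ?_
  have h_integrable := integrable_inner_of_mem_couplings hα hρ hπ
  obtain ⟨rfl, rfl⟩ := hπ
  have hf_fst := hf.comp_measurable measurable_fst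
  have hf_snd := hf'.comp_measurable measurable_snd
  rw [integral_map measurable_fst.aemeasurable hf.aestronglyMeasurable,
    integral_map measurable_snd.aemeasurable hf'.aestronglyMeasurable]
  refine le_trans ?_ (integral_add hf_fst hf_snd).le
  refine integral_mono_ae h_integrable (hf_fst.add hf_snd) ?_
  filter_upwards [ae_of_ae_map measurable_snd.aemeasurable h_bdd] with q hq
  exact inner_le_add_fenchelConjugate hq q.1

lemma exists_gluing_of_mem_couplings [IsFiniteMeasure α] (hπ : π ∈ Couplings α ρ)
    (hσ : σ ∈ Couplings ρ ρ') :
    ∃ τ : Measure ((EuclideanSpace ℝ (Fin d) × EuclideanSpace ℝ (Fin d)) ×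
        EuclideanSpace ℝ (Fin d)),
      τ.fst = π ∧ τ.map (Prod.map Prod.snd id) = σ ∧
        τ.map (fun q ↦ (q.1.1, q.2)) ∈ Couplings α ρ' := by
  obtain ⟨rfl, rfl⟩ := hπ
  obtain ⟨h_mid, rfl⟩ := hσ
  have : IsFiniteMeasure π := Measure.isFiniteMeasure_of_map measurable_fst.aemeasurable
  have : IsFiniteMeasure (σ.map Prod.fst) := h_mid ▸ inferInstance
  have : IsFiniteMeasure σ := Measure.isFiniteMeasure_of_map measurable_fst.aemeasurable
  obtain ⟨τ, rfl, rfl⟩ := exists_gluing h_mid.symm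
  refine ⟨τ, rfl, rfl, ?_, ?_⟩
  · rw [Measure.fst, Measure.map_map (by fun_prop) (by fun_prop),
      Measure.map_map (by fun_prop) (by fun_prop)]
    rfl
  · rw [Measure.map_map (by fun_prop) (by fun_prop), Measure.map_map (by fun_prop) (by fun_prop)]
    rfl

lemma OTcost_le_OTcost_add [IsProbabilityMeasure α] [IsProbabilityMeasure ρ] {R' ε : ℝ}
    (hα : Integrable (fun x ↦ ‖x‖) α) (hρ : ∀ᵐ y ∂ρ, ‖y‖ ≤ R) (hρ' : ∀ᵐ y ∂ρ', ‖y‖ ≤ R')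
    (hσ : σ ∈ Couplings ρ ρ') (hε : ∀ᵐ q ∂σ, ‖q.1 - q.2‖ ≤ ε) :
    OTcost α ρ ≤ OTcost α ρ' + ε * ∫ x, ‖x‖ ∂α := by
  refine OTcost_le fun π hπ ↦ ?_
  have hπ_inner := integrable_inner_of_mem_couplings hα hρ hπ
  obtain ⟨τ, rfl, rfl, hτ⟩ := exists_gluing_of_mem_couplings hπ hσ
  have h_inner : Integrable (fun q ↦ ⟪q.1.1, q.1.2⟫) τ := hπ_inner.comp_measurable measurable_fst
  have h_inner' : Integrable (fun q ↦ ⟪q.1.1, q.2⟫) τ :=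
    (integrable_inner_of_mem_couplings hα hρ' hτ).comp_measurable (by fun_prop)
  have h_fst : α = τ.map fun q ↦ q.1.1 :=
    hπ.1.symm.trans (Measure.map_map measurable_fst measurable_fst)
  have h_norm : Integrable (fun q ↦ ‖q.1.1‖) τ := by
    rw [h_fst] at hα
    exact hα.comp_measurable (by fun_prop)
  calc ∫ q, ⟪q.1, q.2⟫ ∂τ.fst = ∫ q, ⟪q.1.1, q.1.2⟫ ∂τ :=
        integral_map measurable_fst.aemeasurable (by fun_prop)
    _ ≤ ∫ q, (⟪q.1.1, q.2⟫ + ε * ‖q.1.1‖) ∂τ := by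
        refine integral_mono_ae h_inner (h_inner'.add (h_norm.const_mul ε)) ?_
        filter_upwards [ae_of_ae_map (by fun_prop) hε] with q hq
        have h_diff := (real_inner_le_norm q.1.1 (q.1.2 - q.2)).trans
          (mul_le_mul_of_nonneg_left hq (norm_nonneg _))
        rw [inner_sub_right, mul_comm, sub_le_iff_le_add'] at h_diff
        exact h_diff
    _ = ∫ q, ⟪q.1, q.2⟫ ∂τ.map (fun q ↦ (q.1.1, q.2)) + ε * ∫ x, ‖x‖ ∂α := by
        rw [integral_add h_inner' (h_norm.const_mul ε), integral_const_mul, h_fst,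
          integral_map (by fun_prop) (by fun_prop), integral_map (by fun_prop) (by fun_prop)]
    _ ≤ OTcost α ρ' + ε * ∫ x, ‖x‖ ∂α := add_le_add_left (le_OTcost hα hρ' hτ) _

lemma integral_dotProduct_inner_le_OTcost {ι : Type*} [Fintype ι] [IsFiniteMeasure ν]
    (hν : Integrable (fun x ↦ ‖x‖) ν) (a : ι → EuclideanSpace ℝ (Fin d))
    {h : EuclideanSpace ℝ (Fin d) → ι → ℝ} (hh : Measurable h)
    (h_simplex : ∀ x, h x ∈ stdSimplex ℝ ι) :
    ∫ x, h x ⬝ᵥ (fun i ↦ ⟪x, a i⟫) ∂ν ≤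
      OTcost ν (discreteMeasure a fun i ↦ ∫ x, h x i ∂ν) := by
  have h_plan : semidiscretePlan ν h a ∈ Couplings ν (discreteMeasure a fun i ↦ ∫ x, h x i ∂ν) :=
    ⟨map_fst_semidiscretePlan hh h_simplex a, map_snd_semidiscretePlan hh h_simplex a⟩
  have h_bdd : ∀ᵐ y ∂discreteMeasure a fun i ↦ ∫ x, h x i ∂ν, ‖y‖ ≤ ‖a‖ :=
    ae_discreteMeasure (norm_le_pi_norm a)
  rw [← integral_semidiscretePlan (G := fun q ↦ ⟪q.1, q.2⟫) hh h_simplex (by fun_prop)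
    (integrable_inner_of_mem_couplings hν h_bdd h_plan)]
  exact le_OTcost hν h_bdd h_plan

lemma OTcost_discreteMeasure_le {ι : Type*} [Fintype ι] [Nonempty ι] [IsProbabilityMeasure α]
    (hα : Integrable (fun x ↦ ‖x‖) α) (a : ι → EuclideanSpace ℝ (Fin d)) {p : ι → ℝ}
    (hp : p ∈ stdSimplex ℝ ι) (b : ι → ℝ) :
    OTcost α (discreteMeasure a p) ≤ ∫ x, maxAffine a b x ∂α - p ⬝ᵥ b := by
  have := isProbabilityMeasure_discreteMeasure (a := a) hp
  have h_conj : ∫ y, fenchelConjugate (maxAffine a b) y ∂discreteMeasure a p ≤ -(p ⬝ᵥ b) := by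
    rw [integral_discreteMeasure hp.1, ← dotProduct_neg]
    exact dotProduct_le_dotProduct_of_nonneg_left
      (fun i ↦ fenchelConjugate_maxAffine_le a b i) hp.1
  have h_dual := OTcost_le_integral_add_integral_fenchelConjugate hα
    (ae_discreteMeasure (p := p) (norm_le_pi_norm a)) (integrable_maxAffine hα a b)
    (integrable_discreteMeasure _) (ae_discreteMeasure (bddAbove_inner_sub_maxAffine a b))
  linarith

lemma integral_maxAffine_sub_le_OTcost {ι : Type*} [Fintype ι] [Nonempty ι]
    [IsProbabilityMeasure ν] (hν : Integrable (fun x ↦ ‖x‖) ν)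
    {a : ι → EuclideanSpace ℝ (Fin d)} {b : ι → ℝ} {h : EuclideanSpace ℝ (Fin d) → ι → ℝ}
    (hh : Measurable h) (h_simplex : ∀ x, h x ∈ stdSimplex ℝ ι) {κ : ℝ}
    (hκ : ∀ x i, ⟪x, a i⟫ + b i ≤ h x ⬝ᵥ (fun j ↦ ⟪x, a j⟫ + b j) + κ) :
    ∫ x, maxAffine a b x ∂ν - (fun i ↦ ∫ x, h x i ∂ν) ⬝ᵥ b ≤
      OTcost ν (discreteMeasure a fun i ↦ ∫ x, h x i ∂ν) + κ := by
  have h_inner : Integrable (fun x ↦ h x ⬝ᵥ fun i ↦ ⟪x, a i⟫) ν :=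
    integrable_dotProduct_of_mem_stdSimplex hh h_simplex (.of_eval fun i ↦
      (hν.mul_const ‖a i‖).mono' (by fun_prop) (.of_forall fun x ↦ norm_inner_le_norm x (a i)))
  have h_const : Integrable (fun x ↦ h x ⬝ᵥ b) ν :=
    integrable_dotProduct_of_mem_stdSimplex hh h_simplex (integrable_const b)
  have h_value : Integrable (fun x ↦ h x ⬝ᵥ (fun i ↦ ⟪x, a i⟫) + h x ⬝ᵥ b) ν :=
    h_inner.add h_const
  calc ∫ x, maxAffine a b x ∂ν - (fun i ↦ ∫ x, h x i ∂ν) ⬝ᵥ b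
      ≤ ∫ x, (h x ⬝ᵥ (fun i ↦ ⟪x, a i⟫) + h x ⬝ᵥ b + κ) ∂ν - (fun i ↦ ∫ x, h x i ∂ν) ⬝ᵥ b := by
        refine sub_le_sub_right (integral_mono (integrable_maxAffine hν a b)
          (h_value.add (integrable_const κ)) fun x ↦ ciSup_le fun i ↦ (hκ x i).trans_eq ?_) _
        exact congrArg (· + κ) (dotProduct_add _ _ _)
    _ = ∫ x, h x ⬝ᵥ (fun i ↦ ⟪x, a i⟫) ∂ν + κ := by
        rw [integral_add h_value (integrable_const κ), integral_add h_inner h_const,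
          integral_dotProduct_const (integrable_of_mem_stdSimplex hh h_simplex)]
        simp only [integral_const, probReal_univ, one_smul]
        ring
    _ ≤ OTcost ν (discreteMeasure a fun i ↦ ∫ x, h x i ∂ν) + κ :=
        add_le_add_left (integral_dotProduct_inner_le_OTcost hν a hh h_simplex) κ

end OptimalTransport

section ConvexOrder

lemma le_of_forall_pos_le_add_mul {x y M : ℝ} (h : ∀ ε > 0, x ≤ y + ε * M) : x ≤ y := by
  have h_tendsto : Filter.Tendsto (fun ε ↦ y + ε * M) (nhds 0) (nhds y) :=
    Continuous.tendsto' (by fun_prop) 0 y (by simp)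
  exact ge_of_tendsto (h_tendsto.mono_left nhdsWithin_le_nhds)
    (eventually_mem_nhdsWithin.mono h : ∀ᶠ ε in nhdsWithin 0 (Set.Ioi 0), x ≤ y + ε * M)

variable {d : ℕ} {μ ν ρ : Measure (EuclideanSpace ℝ (Fin d))} [IsProbabilityMeasure μ]
  [IsProbabilityMeasure ν]

lemma OTcost_discreteMeasure_le_of_convexOrder {ι : Type*} [Fintype ι]
    (hμ : Integrable (fun x ↦ ‖x‖) μ) (hν : Integrable (fun x ↦ ‖x‖) ν)
    (h : ConvexOrder μ ν) (a : ι → EuclideanSpace ℝ (Fin d))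
    {p : ι → ℝ} (hp_pos : ∀ i, 0 < p i) (hp : ∑ i, p i = 1) :
    OTcost μ (discreteMeasure a p) ≤ OTcost ν (discreteMeasure a p) := by
  have : Nonempty ι := by
    by_contra! h_empty
    simp at hp
  refine le_of_forall_pos_le_add_mul (M := Fintype.card ι) fun δ hδ ↦ ?_
  set w : EuclideanSpace ℝ (Fin d) → ι → ℝ := fun x i ↦ ⟪x, a i⟫
  have hw_int : Integrable w ν := .of_eval fun i ↦
    (hν.mul_const ‖a i‖).mono' (by fun_prop) (.of_forall fun x ↦ norm_inner_le_norm x (a i))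
  obtain ⟨b', hb'⟩ := exists_integral_softmax_eq (hw_int.smul δ⁻¹) hp_pos hp
  set b := δ • b'
  have h_scale (x) : δ⁻¹ • (w x + b) = δ⁻¹ • w x + b' := by
    rw [smul_add, inv_smul_smul₀ hδ.ne']
  have h_value := integral_maxAffine_sub_le_OTcost (a := a) (b := b)
    (h := fun x ↦ softmax (δ⁻¹ • w x + b')) hν
    (continuous_softmax.measurable.comp (by fun_prop)) (fun x ↦ softmax_mem_stdSimplex _)
    fun x i ↦ h_scale x ▸ le_softmax_dotProduct_add hδ (w x + b) i
  simp only [Pi.smul_apply] at hb'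
  simp only [hb'] at h_value
  calc OTcost μ (discreteMeasure a p) ≤ ∫ x, maxAffine a b x ∂μ - p ⬝ᵥ b :=
        OTcost_discreteMeasure_le hμ a ⟨fun i ↦ (hp_pos i).le, hp⟩ b
    _ ≤ ∫ x, maxAffine a b x ∂ν - p ⬝ᵥ b :=
        sub_le_sub_right (h _ (convexOn_maxAffine a b) (integrable_maxAffine hμ a b)
          (integrable_maxAffine hν a b)) _
    _ ≤ OTcost ν (discreteMeasure a p) + δ * Fintype.card ι := h_value

lemma map_prodMk_mem_couplings {f g : EuclideanSpace ℝ (Fin d) → EuclideanSpace ℝ (Fin d)}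
    (hf : Measurable f) (hg : Measurable g) :
    ρ.map (fun y ↦ (f y, g y)) ∈ Couplings (ρ.map f) (ρ.map g) :=
  ⟨Measure.map_map measurable_fst (hf.prodMk hg), Measure.map_map measurable_snd (hf.prodMk hg)⟩

lemma OTcost_le_of_convexOrder [IsProbabilityMeasure ρ] (hμ : Integrable (fun x ↦ ‖x‖) μ)
    (hν : Integrable (fun x ↦ ‖x‖) ν) (h : ConvexOrder μ ν) {R : ℝ} (hρ : ∀ᵐ y ∂ρ, ‖y‖ ≤ R) :
    OTcost μ ρ ≤ OTcost ν ρ := by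
  refine le_of_forall_pos_le_add_mul (M := ∫ x, ‖x‖ ∂ν + ∫ x, ‖x‖ ∂μ) fun ε hε ↦ ?_
  obtain ⟨g, T, p, hg_meas, hg, hp_pos, hp, h_map⟩ := exists_map_eq_discreteMeasure
    (isCompact_closedBall (0 : EuclideanSpace ℝ (Fin d)) R).totallyBounded
    (by simpa only [mem_closedBall_zero_iff] using hρ) hε
  obtain ⟨R', hR'⟩ := T.finite_toSet.isBounded.exists_norm_le
  have hρ' : ∀ᵐ y ∂ρ.map g, ‖y‖ ≤ R' := h_map ▸ ae_discreteMeasure fun i ↦ hR' i i.2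
  have hσ : ρ.map (fun y ↦ (y, g y)) ∈ Couplings ρ (ρ.map g) := by
    simpa only [Measure.map_id'] using map_prodMk_mem_couplings (ρ := ρ) measurable_id' hg_meas
  have hσ' : ρ.map (fun y ↦ (g y, y)) ∈ Couplings (ρ.map g) ρ := by
    simpa only [Measure.map_id'] using map_prodMk_mem_couplings (ρ := ρ) hg_meas measurable_id'
  have := Measure.isProbabilityMeasure_map (μ := ρ) hg_meas.aemeasurable
  calc OTcost μ ρ ≤ OTcost μ (ρ.map g) + ε * ∫ x, ‖x‖ ∂μ := by
        refine OTcost_le_OTcost_add hμ hρ hρ' hσ ?_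
        rw [ae_map_iff (by fun_prop) (measurableSet_le (by fun_prop) measurable_const)]
        simpa only [dist_eq_norm] using hg
    _ ≤ OTcost ν (ρ.map g) + ε * ∫ x, ‖x‖ ∂μ := by
        rw [h_map]
        gcongr
        exact OTcost_discreteMeasure_le_of_convexOrder hμ hν h _ hp_pos hp
    _ ≤ OTcost ν ρ + ε * ∫ x, ‖x‖ ∂ν + ε * ∫ x, ‖x‖ ∂μ := by
        gcongr
        refine OTcost_le_OTcost_add hν hρ' hρ hσ' ?_
        rw [ae_map_iff (by fun_prop) (measurableSet_le (by fun_prop) measurable_const)]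
        simpa only [dist_eq_norm, norm_sub_rev] using hg
    _ = OTcost ν ρ + ε * (∫ x, ‖x‖ ∂ν + ∫ x, ‖x‖ ∂μ) := by ring

lemma integral_maxAffine_le_of_forall_OTcost_le {ι : Type*} [Fintype ι] [Nonempty ι]
    (hμ : Integrable (fun x ↦ ‖x‖) μ) (hν : Integrable (fun x ↦ ‖x‖) ν)
    {a : ι → EuclideanSpace ℝ (Fin d)}
    (H : ∀ p ∈ stdSimplex ℝ ι, OTcost μ (discreteMeasure a p) ≤ OTcost ν (discreteMeasure a p))
    (b : ι → ℝ) :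
    ∫ x, maxAffine a b x ∂μ ≤ ∫ x, maxAffine a b x ∂ν := by
  classical
  let _ : MeasurableSpace ι := ⊤
  obtain ⟨T, hT_meas, hT⟩ := exists_measurable_argmax (u := fun i x ↦ ⟪x, a i⟫ + b i)
    fun i ↦ (by fun_prop : Continuous fun x ↦ ⟪x, a i⟫ + b i).measurable
  set h : EuclideanSpace ℝ (Fin d) → ι → ℝ := fun x ↦ Pi.single (T x) 1
  have hh : Measurable h := (measurable_from_top (f := fun i ↦ Pi.single i (1 : ℝ))).comp hT_meas
  have h_simplex (x) : h x ∈ stdSimplex ℝ ι := single_mem_stdSimplex ℝ (T x)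
  set p : ι → ℝ := fun i ↦ ∫ x, h x i ∂μ
  have hp : p ∈ stdSimplex ℝ ι := integral_mem_stdSimplex hh h_simplex
  have h_attained : ∫ x, maxAffine a b x ∂μ - p ⬝ᵥ b ≤ OTcost μ (discreteMeasure a p) + 0 :=
    integral_maxAffine_sub_le_OTcost hμ hh h_simplex fun x i ↦ by simpa [h] using hT x i
  have h_dual : OTcost ν (discreteMeasure a p) ≤ ∫ x, maxAffine a b x ∂ν - p ⬝ᵥ b :=
    OTcost_discreteMeasure_le hν a hp b
  linarith [H p hp]

lemma convexOrder_of_forall_OTcost_le (hμ : Integrable (fun x ↦ ‖x‖) μ)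
    (hν : Integrable (fun x ↦ ‖x‖) ν)
    (H : ∀ (n : ℕ) (a : Fin (n + 1) → EuclideanSpace ℝ (Fin d)), ∀ p ∈ stdSimplex ℝ (Fin (n + 1)),
      OTcost μ (discreteMeasure a p) ≤ OTcost ν (discreteMeasure a p)) :
    ConvexOrder μ ν := by
  intro f hf hfμ hfν
  have hf_cont : Continuous f := continuousOn_univ.1 (hf.continuousOn isOpen_univ)
  obtain ⟨a, b, h_mono, h_tendsto⟩ :=
    exists_tendsto_maxAffine hf hf_cont.lowerSemicontinuous
  have h_limit {α : Measure (EuclideanSpace ℝ (Fin d))} [IsProbabilityMeasure α]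
      (hα : Integrable (fun x ↦ ‖x‖) α) (hfα : Integrable f α) :=
    integral_tendsto_of_tendsto_of_monotone
      (fun n ↦ integrable_maxAffine hα (fun i : Fin (n + 1) ↦ a i) fun i ↦ b i) hfα
      (.of_forall h_mono) (.of_forall h_tendsto)
  exact le_of_tendsto_of_tendsto' (h_limit hμ hfμ) (h_limit hν hfν) fun n ↦
    integral_maxAffine_le_of_forall_OTcost_le hμ hν (H n _) _

end ConvexOrder

theorem stmt10 (d : ℕ) (hd : 1 ≤ d)
    (μ ν : Measure (EuclideanSpace ℝ (Fin d)))
    [IsProbabilityMeasure μ] [IsProbabilityMeasure ν]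
    (hμ : Integrable (fun x => ‖x‖) μ) (hν : Integrable (fun y => ‖y‖) ν) :
    ConvexOrder μ ν ↔
      ∀ ρ : Measure (EuclideanSpace ℝ (Fin d)), IsProbabilityMeasure ρ →
        (∃ R : ℝ, ρ (closedBall (0 : EuclideanSpace ℝ (Fin d)) R)ᶜ = 0) →
        OTcost μ ρ ≤ OTcost ν ρ := by
  refine ⟨fun h ρ hρ ⟨R, hR⟩ ↦ ?_, fun H ↦ ?_⟩
  · refine OTcost_le_of_convexOrder hμ hν h (R := R) ?_
    filter_upwards [mem_ae_iff.2 hR] with y hy using mem_closedBall_zero_iff.1 hy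
  · refine convexOrder_of_forall_OTcost_le hμ hν fun n a p hp ↦
      H _ (isProbabilityMeasure_discreteMeasure hp) ⟨‖a‖, mem_ae_iff.1 (ae_discreteMeasure ?_)⟩
    exact fun i ↦ mem_closedBall_zero_iff.2 (norm_le_pi_norm a i)
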